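/- Let B be a real Banach space and I a finite index set. Let (V_i)_{i∈I} be an independent family of closed linear subspaces of B and let V = Σ_{i∈I} V_i be their (internal, direct) sum. Let (W_i)_{i∈I} be an independent family of closed linear subspaces of the continuous dual B* with W = Σ_{i∈I} W_i, and assume W_i ⊥ V_j for all i ≠ j, i.e. f(v) = 0 whenever f ∈ W_i and v ∈ V_j with i ≠ j. Then V ∩ W^⊥ = Σ_{i∈I} (V_i ∩ W_i^⊥) = Σ_{i∈I} (V_i ∩ W^⊥); moreover the families (V_i ∩ W_i^⊥)_{i∈I} and (V_i ∩ W^⊥)_{i∈I} of subspaces are again independent, so these sums are direct. -/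

import Mathlib

/-- A (finite) family of subspaces is *independent* if whenever `∑ i, u i = 0`
with `u i ∈ U i` for all `i`, then each `u i = 0`. -/
def SubmoduleIndepFamily {B : Type*} [AddCommGroup B] [Module ℝ B]
    {I : Type*} [Fintype I] (U : I → Submodule ℝ B) : Prop :=
  ∀ u : I → B, (∀ i, u i ∈ U i) → (∑ i, u i) = 0 → ∀ i, u i = 0

/-- The pre-annihilator `S^⊥ = {x ∈ B : f x = 0 for all f ∈ S}` of a subspace `S` of the
topological dual of `B`. -/
def preAnnihilator {B : Type*} [NormedAddCommGroup B] [NormedSpace ℝ B]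
    (S : Submodule ℝ (B →L[ℝ] ℝ)) : Submodule ℝ B where
  carrier := {x : B | ∀ f ∈ S, f x = 0}
  add_mem' := by
    intro a b ha hb f hf
    rw [map_add, ha f hf, hb f hf, add_zero]
  zero_mem' := by
    intro f hf
    exact map_zero f
  smul_mem' := by
    intro c a ha f hf
    rw [map_smul, ha f hf, smul_zero]

/-!
Write `x ∈ ∑ i, V i` as `∑ j, u j` with `u j ∈ V j`. A functional `f ∈ W i` kills every `u j` with
`j ≠ i`, so `f x = f (u i)`: if `x` is annihilated by all the `W i`, then each component `u i` is
annihilated by `W i`. Conversely, `V i` is already annihilated by the other `W j`, so on `V i` being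
annihilated by `W i` and by `∑ j, W j` is the same condition.
-/

section DualCoannihilator

variable {R M ι : Type*} [CommSemiring R] [AddCommMonoid M] [Module R M]

theorem inf_dualCoannihilator_iSup {V : Submodule R M} {W : ι → Submodule R (Module.Dual R M)}
    {i : ι} (hV : ∀ j ≠ i, V ≤ (W j).dualCoannihilator) :
    V ⊓ (⨆ j, W j).dualCoannihilator = V ⊓ (W i).dualCoannihilator := by
  rw [Submodule.dualCoannihilator_iSup_eq]
  refine le_antisymm (inf_le_inf_left V (iInf_le _ i)) (le_inf inf_le_left (le_iInf fun j ↦ ?_))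
  obtain rfl | hji := eq_or_ne j i
  · exact inf_le_right
  · exact inf_le_left.trans (hV j hji)

theorem iSup_inf_dualCoannihilator_iSup {V : ι → Submodule R M}
    {W : ι → Submodule R (Module.Dual R M)}
    (hperp : Pairwise fun i j ↦ V j ≤ (W i).dualCoannihilator) :
    (⨆ i, V i) ⊓ (⨆ i, W i).dualCoannihilator = ⨆ i, V i ⊓ (W i).dualCoannihilator := by
  apply le_antisymm
  · rintro x ⟨hxV, hxW⟩
    obtain ⟨u, hu, rfl⟩ := (Submodule.mem_iSup_iff_exists_finsupp V x).mp hxV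
    refine sum_mem fun i _ ↦ Submodule.mem_iSup_of_mem i (Submodule.mem_inf.mpr ⟨hu i, ?_⟩)
    refine (Submodule.mem_dualCoannihilator _).mpr fun f hf ↦ ?_
    have apply_eq_zero : ∀ j ≠ i, f (u j) = 0 := fun j hji ↦
      (Submodule.mem_dualCoannihilator _).mp (hperp hji.symm (hu j)) f hf
    calc f (u i) = u.sum fun _ y ↦ f y :=
          (Finsupp.sum_eq_single i (fun j _ ↦ apply_eq_zero j) fun _ ↦ map_zero f).symm
      _ = f (u.sum fun _ y ↦ y) := (map_finsuppSum f u _).symm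
      _ = 0 := (Submodule.mem_dualCoannihilator _).mp hxW f (Submodule.mem_iSup_of_mem i hf)
  · refine iSup_le fun i ↦ ?_
    rw [← inf_dualCoannihilator_iSup fun j hji ↦ hperp hji]
    exact inf_le_inf_right _ (le_iSup V i)

theorem stmt0_general {V : ι → Submodule R M} (hV : iSupIndep V)
    {W : ι → Submodule R (Module.Dual R M)}
    (hperp : Pairwise fun i j ↦ V j ≤ (W i).dualCoannihilator) :
    ((⨆ i, V i) ⊓ (⨆ i, W i).dualCoannihilator = ⨆ i, V i ⊓ (W i).dualCoannihilator) ∧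
    ((⨆ i, V i) ⊓ (⨆ i, W i).dualCoannihilator = ⨆ i, V i ⊓ (⨆ j, W j).dualCoannihilator) ∧
    iSupIndep (fun i ↦ V i ⊓ (W i).dualCoannihilator) ∧
    iSupIndep (fun i ↦ V i ⊓ (⨆ j, W j).dualCoannihilator) := by
  have component_eq (i : ι) :
      V i ⊓ (⨆ j, W j).dualCoannihilator = V i ⊓ (W i).dualCoannihilator :=
    inf_dualCoannihilator_iSup fun _ hji ↦ hperp hji
  have indep : iSupIndep fun i ↦ V i ⊓ (W i).dualCoannihilator := hV.mono fun _ ↦ inf_le_left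
  simp only [component_eq]
  exact ⟨iSup_inf_dualCoannihilator_iSup hperp, iSup_inf_dualCoannihilator_iSup hperp, indep, indep⟩

end DualCoannihilator

theorem submodule_sum_eq_iSup {R M ι : Type*} [Semiring R] [AddCommMonoid M] [Module R M]
    [Fintype ι] (U : ι → Submodule R M) : ∑ i, U i = ⨆ i, U i :=
  Finset.sup_univ_eq_iSup U

theorem submoduleIndepFamily_iff_iSupIndep {B I : Type*} [AddCommGroup B] [Module ℝ B] [Fintype I]
    {U : I → Submodule ℝ B} : SubmoduleIndepFamily U ↔ iSupIndep U := by
  classical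
  rw [iSupIndep_iff_finsetSum_eq_zero_imp_eq_zero]
  refine ⟨fun hU s u hu hsum i hi ↦ ?_, fun hU u hu hsum i ↦
    hU Finset.univ u (fun j _ ↦ hu j) hsum i (Finset.mem_univ i)⟩
  let extended (j : I) : B := if j ∈ s then u j else 0
  have extended_mem (j : I) : extended j ∈ U j := by
    by_cases hj : j ∈ s <;> simp [extended, hj, hu]
  have sum_extended : ∑ j, extended j = 0 := by simpa [extended] using hsum
  simpa [extended, hi] using hU extended extended_mem sum_extended i

theorem preAnnihilator_eq_dualCoannihilator {B : Type*} [NormedAddCommGroup B] [NormedSpace ℝ B]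
    (S : Submodule ℝ (B →L[ℝ] ℝ)) :
    preAnnihilator S = (S.map (ContinuousLinearMap.coeLM ℝ)).dualCoannihilator := by
  ext x
  rw [Submodule.mem_dualCoannihilator]
  exact (Set.forall_mem_image (p := fun φ : Module.Dual ℝ B ↦ φ x = 0)).symm

/-- Lemma `lem:ortho` of the paper: if `(V i)` is an independent family of closed subspaces
of a Banach space `B`, `(W i)` an independent family of closed subspaces of the dual `B*`
with `W i ⊥ V j` for `i ≠ j`, then
`(∑ V i) ∩ (∑ W i)^⊥ = ∑ (V i ∩ (W i)^⊥) = ∑ (V i ∩ (∑ W j)^⊥)`,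
and the families `(V i ∩ (W i)^⊥)` and `(V i ∩ (∑ W j)^⊥)` are again independent. -/
theorem stmt0 {B : Type*} [NormedAddCommGroup B] [NormedSpace ℝ B] [CompleteSpace B]
    {I : Type*} [Fintype I]
    (V : I → Submodule ℝ B) (hVclosed : ∀ i, IsClosed (V i : Set B))
    (hVindep : SubmoduleIndepFamily V)
    (W : I → Submodule ℝ (B →L[ℝ] ℝ))
    (hWclosed : ∀ i, IsClosed (W i : Set (B →L[ℝ] ℝ)))
    (hWindep : SubmoduleIndepFamily W)
    (hperp : ∀ i j, i ≠ j → ∀ f ∈ W i, ∀ v ∈ V j, f v = 0) :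
    ((∑ i, V i) ⊓ preAnnihilator (∑ i, W i) = ∑ i, (V i ⊓ preAnnihilator (W i))) ∧
    ((∑ i, V i) ⊓ preAnnihilator (∑ i, W i)
        = ∑ i, (V i ⊓ preAnnihilator (∑ j, W j))) ∧
    SubmoduleIndepFamily (fun i => V i ⊓ preAnnihilator (W i)) ∧
    SubmoduleIndepFamily (fun i => V i ⊓ preAnnihilator (∑ j, W j)) := by
  simp only [submodule_sum_eq_iSup, submoduleIndepFamily_iff_iSupIndep,
    preAnnihilator_eq_dualCoannihilator, Submodule.map_iSup] at hVindep ⊢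
  exact stmt0_general hVindep fun i j hij ↦
    (preAnnihilator_eq_dualCoannihilator (W i)).le.trans' fun v hv f hf ↦ hperp i j hij f hf v hv
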